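/- For $\lambda\in\mathbb{C}$ with $\lambda\neq 0$ and $y\in\mathbb{R}$ with $y\neq 0$, define $$T_1(\lambda;y)=I_2+\frac{i}{2\lambda y}\begin{bmatrix}-1&-1\\1&1\end{bmatrix},$$ and, for a function $p$ of $y$, let $$B^{\rm FN}(\lambda;y)=\begin{bmatrix}-i\lambda&p(y)\\p(y)&i\lambda\end{bmatrix}.$$ Let $B_0(\lambda)=\begin{bmatrix}-i\lambda&0\\0&i\lambda\end{bmatrix}$ be the matrix $B^{\rm FN}$ with $p=0$ and let $B_1(\lambda;y)=\begin{bmatrix}-i\lambda&1/y\\1/y&i\lambda\end{bmatrix}$ be the matrix $B^{\rm FN}$ with $p(y)=1/y$. Then the entries of $T_1$ are differentiable in $y$ and $$\frac{\partial T_1}{\partial y}+T_1B_0=B_1T_1,$$ where $\partial T_1/\partial y$ is the entrywise derivative of $T_1$ with respect to $y$. -/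

import Mathlib

/-- The matrix `B^FN(λ; y) = [[-iλ, p(y)], [p(y), iλ]]` of the `y`-part of the
Flaschka–Newell Lax pair, for a function `p`. -/
noncomputable def BFN (p : ℝ → ℂ) (l : ℂ) (y : ℝ) : Matrix (Fin 2) (Fin 2) ℂ :=
  !![-Complex.I * l, p y; p y, Complex.I * l]

/-- The matrix `B₀`: `B^FN` with the seed solution `p = 0`. -/
noncomputable def B0 (l : ℂ) (y : ℝ) : Matrix (Fin 2) (Fin 2) ℂ :=
  BFN (fun _ => 0) l y

/-- The matrix `B₁`: `B^FN` with the first-order rational solution `p = 1/y`. -/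
noncomputable def B1 (l : ℂ) (y : ℝ) : Matrix (Fin 2) (Fin 2) ℂ :=
  BFN (fun t => 1 / (t : ℂ)) l y

/-- The first-order Darboux matrix `T₁(λ; y) = I₂ + (i / (2λy)) [[-1, -1], [1, 1]]`. -/
noncomputable def T1 (l : ℂ) (y : ℝ) : Matrix (Fin 2) (Fin 2) ℂ :=
  1 + (Complex.I / (2 * l * (y : ℂ))) • !![(-1 : ℂ), -1; 1, 1]

/-!
Write `B^FN = aσ₃ + pσ₁` with `a = -iλ`, and look for a Darboux matrix `T = 1 + cN` with
`N = [[-1, -1], [1, 1]]`. Since `Nσ₃ - σ₃N = 2σ₁` and `σ₁N = -N`, the equation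
`T' + T(aσ₃) = (aσ₃ + pσ₁)T` splits into `p = 2ac` along `σ₁` and `c' = -pc` along `N`. Eliminating
`c` leaves the Riccati equation `p' = -p²`, which `p = 1/y` solves.
-/

open Complex

/-- The direction `[[-1, -1], [1, 1]]` in which the Darboux matrix departs from the identity. -/
def darbouxDirection (R : Type*) [Ring R] : Matrix (Fin 2) (Fin 2) R :=
  !![-1, -1; 1, 1]

/-- The Pauli matrix `σ₁`, the coefficient of the potential `p` in `BFN p l y`. -/
def pauliX (R : Type*) [Ring R] : Matrix (Fin 2) (Fin 2) R :=
  !![0, 1; 1, 0]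

/-- The Pauli matrix `σ₃`, the coefficient of `-iλ` in `BFN p l y`. -/
def pauliZ (R : Type*) [Ring R] : Matrix (Fin 2) (Fin 2) R :=
  !![1, 0; 0, -1]

/-- The Darboux matrix that maps the seed solution `0` to the potential `p`. The coefficient of
`darbouxDirection` is `c = i p / (2λ)`, the solution of `p = 2(-iλ)c`. -/
noncomputable def darbouxMatrix (p : ℝ → ℂ) (l : ℂ) (y : ℝ) : Matrix (Fin 2) (Fin 2) ℂ :=
  1 + (I / (2 * l) * p y) • darbouxDirection ℂ

section Algebra

variable {R : Type*}

theorem lie_darbouxDirection_pauliZ [Ring R] :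
    ⁅darbouxDirection R, pauliZ R⁆ = 2 • pauliX R := by
  rw [Ring.lie_def]
  ext i j
  fin_cases i <;> fin_cases j <;> simp [darbouxDirection, pauliX, pauliZ] <;> norm_num

theorem pauliX_mul_darbouxDirection [Ring R] :
    pauliX R * darbouxDirection R = -darbouxDirection R := by
  simp [pauliX, darbouxDirection]

theorem darboux_intertwining_of_lie_eq [CommRing R] {A : Type*} [Ring A] [Algebra R A]
    {X Z N : A} (hNZ : ⁅N, Z⁆ = 2 • X) (hXN : X * N = -N) {a c p : R}
    (hp : p = 2 * a * c) :
    -(p * c) • N + (1 + c • N) * (a • Z) = (a • Z + p • X) * (1 + c • N) := by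
  have hcomm : N * Z = Z * N + 2 • X := by
    rwa [Ring.lie_def, sub_eq_iff_eq_add'] at hNZ
  simp only [add_mul, mul_add, one_mul, mul_one, smul_mul_assoc, mul_smul_comm, hcomm, hXN, hp]
  module

end Algebra

theorem BFN_eq_smul_pauliZ_add_smul_pauliX (p : ℝ → ℂ) (l : ℂ) (y : ℝ) :
    BFN p l y = (-I * l) • pauliZ ℂ + p y • pauliX ℂ := by
  simp [BFN, pauliZ, pauliX]

theorem darbouxMatrix_intertwines_BFN_zero {l : ℂ} (hl : l ≠ 0) (p : ℝ → ℂ) (y : ℝ) :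
    -(p y * (I / (2 * l) * p y)) • darbouxDirection ℂ +
        darbouxMatrix p l y * BFN (fun _ => 0) l y =
      BFN p l y * darbouxMatrix p l y := by
  have hp : p y = 2 * (-I * l) * (I / (2 * l) * p y) := by
    field_simp
    simp
  simpa only [darbouxMatrix, BFN_eq_smul_pauliZ_add_smul_pauliX, zero_smul, add_zero] using
    darboux_intertwining_of_lie_eq lie_darbouxDirection_pauliZ pauliX_mul_darbouxDirection hp

theorem hasDerivAt_darbouxMatrix_apply {p : ℝ → ℂ} {p' : ℂ} {y : ℝ} (hp : HasDerivAt p p' y)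
    (l : ℂ) (i j : Fin 2) :
    HasDerivAt (fun t => darbouxMatrix p l t i j)
      (((I / (2 * l) * p') • darbouxDirection ℂ) i j) y :=
  ((hp.const_mul (I / (2 * l))).mul_const (darbouxDirection ℂ i j)).const_add
    ((1 : Matrix (Fin 2) (Fin 2) ℂ) i j)

theorem hasDerivAt_one_div_ofReal {y : ℝ} (hy : y ≠ 0) :
    HasDerivAt (fun t : ℝ => 1 / (t : ℂ)) (-(1 / (y : ℂ)) ^ 2) y := by
  simpa using (hasDerivAt_inv (ofReal_ne_zero.mpr hy)).comp_ofReal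

theorem T1_eq_darbouxMatrix (l : ℂ) (y : ℝ) :
    T1 l y = darbouxMatrix (fun t => 1 / (t : ℂ)) l y := by
  rw [T1, darbouxMatrix, darbouxDirection, ← div_eq_mul_one_div, div_div]

theorem darboux_y_part_first_order_general {p : ℝ → ℂ} {l : ℂ} {y : ℝ} (hl : l ≠ 0)
    (hp : HasDerivAt p (-p y ^ 2) y) :
    (∀ i j, DifferentiableAt ℝ (fun t : ℝ => darbouxMatrix p l t i j) y) ∧
      (Matrix.of fun i j => deriv (fun t : ℝ => darbouxMatrix p l t i j) y) +
          darbouxMatrix p l y * BFN (fun _ => 0) l y =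
        BFN p l y * darbouxMatrix p l y := by
  have hT := hasDerivAt_darbouxMatrix_apply hp l
  have hderiv : (Matrix.of fun i j => deriv (fun t : ℝ => darbouxMatrix p l t i j) y) =
      -(p y * (I / (2 * l) * p y)) • darbouxDirection ℂ := by
    ext i j
    rw [Matrix.of_apply, (hT i j).deriv]
    simp only [Matrix.smul_apply, smul_eq_mul]
    ring
  refine ⟨fun i j => (hT i j).differentiableAt, ?_⟩
  rw [hderiv, darbouxMatrix_intertwines_BFN_zero hl]

/-- For `λ ≠ 0` and `y ≠ 0`, the entries of `T₁(λ; ·)` are differentiable at `y`, and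
`∂T₁/∂y + T₁ B₀ = B₁ T₁`, with the entrywise derivative. -/
theorem darboux_y_part_first_order (l : ℂ) (y : ℝ) (hl : l ≠ 0) (hy : y ≠ 0) :
    (∀ i j, DifferentiableAt ℝ (fun t : ℝ => T1 l t i j) y) ∧
      (Matrix.of fun i j => deriv (fun t : ℝ => T1 l t i j) y) + T1 l y * B0 l y =
        B1 l y * T1 l y := by
  simpa only [T1_eq_darbouxMatrix, B0, B1] using
    darboux_y_part_first_order_general hl (hasDerivAt_one_div_ofReal hy)
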